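/- For every natural number n ≥ 3 there exists a natural number M such that every finite family of at least M pairwise noncrossing nonempty compact convex subsets of ℝ² that is in general position contains a subfamily of n sets in convex position. -/

import Mathlib

open Set

noncomputable section

/-- The Euclidean plane. -/
abbrev Plane : Type := EuclideanSpace ℝ (Fin 2)

/-- The 2×2 determinant of two plane vectors. -/
def det2 (u v : Plane) : ℝ := u 0 * v 1 - u 1 * v 0

/-- A convex body in the plane: nonempty, compact and convex. -/
def ConvexBody2 (A : Set Plane) : Prop := A.Nonempty ∧ IsCompact A ∧ Convex ℝ A

/-- A family of sets is in convex position if removing any member changes the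
convex hull of the union of the family. -/
def ConvexPos (F : Set (Set Plane)) : Prop :=
  ∀ A ∈ F, convexHull ℝ (⋃₀ F) ≠ convexHull ℝ (⋃₀ (F \ {A}))

/-- A family is in general position if every 3-element subfamily is in convex position. -/
def GenPos (F : Set (Set Plane)) : Prop :=
  ∀ G ⊆ F, G.ncard = 3 → ConvexPos G

/-- Two sets are noncrossing if both set differences are connected. -/
def NoncrossingPair (A B : Set Plane) : Prop := IsConnected (A \ B) ∧ IsConnected (B \ A)

/-- Two convex bodies are tangent if they intersect but their interiors are disjoint. -/
def TangentBodies (A B : Set Plane) : Prop :=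
  (A ∩ B).Nonempty ∧ interior A ∩ interior B = ∅

/-- The line `{x | f x = c}` (for `f ≠ 0`) is tangent to `A`:
it meets `A` and `A` lies in one of the two closed half-planes it bounds. -/
def TangentLineTo (f : Plane →ₗ[ℝ] ℝ) (c : ℝ) (A : Set Plane) : Prop :=
  (∃ x ∈ A, f x = c) ∧ ((∀ x ∈ A, f x ≤ c) ∨ (∀ x ∈ A, c ≤ f x))

/-- No line is tangent to three distinct members of the family. -/
def NoTripleTangentLine (F : Set (Set Plane)) : Prop :=
  ∀ f : Plane →ₗ[ℝ] ℝ, f ≠ 0 → ∀ c : ℝ, ∀ A ∈ F, ∀ B ∈ F, ∀ C ∈ F,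
    A ≠ B → B ≠ C → A ≠ C →
    ¬ (TangentLineTo f c A ∧ TangentLineTo f c B ∧ TangentLineTo f c C)

/-- The ordered triple `(A₁, A₂, A₃)` is counterclockwise oriented. -/
def CCWOriented (A₁ A₂ A₃ : Set Plane) : Prop :=
  ∃ a₁ ∈ A₁ ∩ frontier (convexHull ℝ (A₁ ∪ A₂ ∪ A₃)),
  ∃ a₂ ∈ A₂ ∩ frontier (convexHull ℝ (A₁ ∪ A₂ ∪ A₃)),
  ∃ a₃ ∈ A₃ ∩ frontier (convexHull ℝ (A₁ ∪ A₂ ∪ A₃)),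
    0 < det2 (a₂ - a₁) (a₃ - a₁)

/-- The ordered triple `(A₁, A₂, A₃)` is clockwise oriented. -/
def CWOriented (A₁ A₂ A₃ : Set Plane) : Prop :=
  ∃ a₁ ∈ A₁ ∩ frontier (convexHull ℝ (A₁ ∪ A₂ ∪ A₃)),
  ∃ a₂ ∈ A₂ ∩ frontier (convexHull ℝ (A₁ ∪ A₂ ∪ A₃)),
  ∃ a₃ ∈ A₃ ∩ frontier (convexHull ℝ (A₁ ∪ A₂ ∪ A₃)),
    det2 (a₂ - a₁) (a₃ - a₁) < 0

/-- An affine line in the plane: an affine subspace with 1-dimensional direction. -/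
def IsLine (L : AffineSubspace ℝ Plane) : Prop := Module.finrank ℝ L.direction = 1

/-- `L` is a transversal line of the family `F`. -/
def TransversalLine (L : AffineSubspace ℝ Plane) (F : Set (Set Plane)) : Prop :=
  IsLine L ∧ ∀ A ∈ F, ((L : Set Plane) ∩ A).Nonempty

/-! For convex bodies `A`, `B` the directions in which `A` reaches strictly further than `B` are the
union, over the points `x` of `A \ B`, of the convex cones of functionals that separate `x` from
`B`. These cones vary semicontinuously with `x`, so when `A \ B` is connected the directions form an
arc of the circle. A member `A` of a family is needed for its convex hull exactly when the arcs of
`A` over all the other members have a common direction, and general position says that any two of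
them do.

On an interval pairwise intersections suffice, by Helly's theorem. Cut the circle at one direction:
the arcs of `A` over the bodies not below it at the cut stay intervals, the others split into two
pieces, one at each end. By Ramsey's theorem (after a pigeonhole step for bodies of equal height at
the cut) one may pass to a subfamily in which the pieces at one fixed end already meet all the
intervals. -/

theorem forall_subset_insert_card_eq_succ {α : Type*} [DecidableEq α] {k : ℕ} {v : α}
    {T : Finset α} {P : Finset α → Prop}
    (hlink : ∀ U ⊆ T, U.card = k → P (insert v U)) (hT : ∀ U ⊆ T, U.card = k + 1 → P U) :
    ∀ U ⊆ insert v T, U.card = k + 1 → P U := by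
  intro U hU hUcard
  by_cases hvU : v ∈ U
  · rw [← Finset.insert_erase hvU]
    exact hlink _ (Finset.subset_insert_iff.1 hU) (by rw [Finset.card_erase_of_mem hvU]; omega)
  · exact hT U ((Finset.subset_insert_iff_of_notMem hvU).1 hU) hUcard

theorem exists_monochromatic_subset {α : Type*} (k a b : ℕ) :
    ∃ N, ∀ (S : Finset α) (c : Finset α → Prop), N ≤ S.card →
      (∃ T ⊆ S, T.card = a ∧ ∀ U ⊆ T, U.card = k → c U) ∨
      (∃ T ⊆ S, T.card = b ∧ ∀ U ⊆ T, U.card = k → ¬ c U) := by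
  classical
  induction k generalizing a b with
  | zero =>
    refine ⟨max a b, fun S c hS => ?_⟩
    by_cases hc : c ∅
    · obtain ⟨T, hTS, hT⟩ := Finset.exists_subset_card_eq (le_of_max_le_left hS)
      exact .inl ⟨T, hTS, hT, fun U _ hU => by rwa [Finset.card_eq_zero.1 hU]⟩
    · obtain ⟨T, hTS, hT⟩ := Finset.exists_subset_card_eq (le_of_max_le_right hS)
      exact .inr ⟨T, hTS, hT, fun U _ hU => by rwa [Finset.card_eq_zero.1 hU]⟩
  | succ k ihk =>
    induction a generalizing b with
    | zero => exact ⟨0, fun S c _ => .inl ⟨∅, by simp⟩⟩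
    | succ a iha =>
      induction b with
      | zero => exact ⟨0, fun S c _ => .inr ⟨∅, by simp⟩⟩
      | succ b ihb =>
        obtain ⟨N₁, hN₁⟩ := iha (b + 1)
        obtain ⟨N₂, hN₂⟩ := ihb
        obtain ⟨N, hN⟩ := ihk N₁ N₂
        refine ⟨N + 1, fun S c hS => ?_⟩
        obtain ⟨v, hv⟩ : S.Nonempty := Finset.card_pos.1 (by omega)
        have hcard : ∀ T ⊆ S.erase v, (insert v T).card = T.card + 1 := fun T hT =>
          Finset.card_insert_of_notMem fun hvT => Finset.notMem_erase v S (hT hvT)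
        have hsub : ∀ T ⊆ S.erase v, insert v T ⊆ S := fun T hT =>
          Finset.insert_subset hv (hT.trans (Finset.erase_subset v S))
        have herase : N ≤ (S.erase v).card := by rw [Finset.card_erase_of_mem hv]; omega
        rcases hN (S.erase v) (fun U => c (insert v U)) herase with
          ⟨R, hRS, hR, hlink⟩ | ⟨R, hRS, hR, hlink⟩
        · rcases hN₁ R c hR.ge with ⟨T, hTR, hT, hc⟩ | ⟨T, hTR, hT, hc⟩
          · exact .inl ⟨insert v T, hsub T (hTR.trans hRS), by rw [hcard T (hTR.trans hRS), hT],
              forall_subset_insert_card_eq_succ (fun U hU => hlink U (hU.trans hTR)) hc⟩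
          · exact .inr ⟨T, hTR.trans (hRS.trans (Finset.erase_subset v S)), hT, hc⟩
        · rcases hN₂ R c hR.ge with ⟨T, hTR, hT, hc⟩ | ⟨T, hTR, hT, hc⟩
          · exact .inl ⟨T, hTR.trans (hRS.trans (Finset.erase_subset v S)), hT, hc⟩
          · exact .inr ⟨insert v T, hsub T (hTR.trans hRS), by rw [hcard T (hTR.trans hRS), hT],
              forall_subset_insert_card_eq_succ (fun U hU => hlink U (hU.trans hTR)) hc⟩

theorem eq_of_mem_triple_of_lt_of_lt {α β : Type*} [DecidableEq α] [LinearOrder β] {g : α → β}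
    {x y z x' y' z' : α} (hxy : g x < g y) (hyz : g y < g z)
    (hx' : x' ∈ ({x, y, z} : Finset α)) (hy' : y' ∈ ({x, y, z} : Finset α))
    (hz' : z' ∈ ({x, y, z} : Finset α)) (hxy' : g x' < g y') (hyz' : g y' < g z') :
    x' = x ∧ y' = y ∧ z' = z := by
  simp only [Finset.mem_insert, Finset.mem_singleton] at hx' hy' hz'
  rcases hx' with rfl | rfl | rfl <;> rcases hy' with rfl | rfl | rfl <;>
    rcases hz' with rfl | rfl | rfl <;> first | exact ⟨rfl, rfl, rfl⟩ | order

theorem exists_monochromatic_increasing_triples {α β : Type*} [LinearOrder β] (a b : ℕ) :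
    ∃ N, ∀ (S : Finset α) (g : α → β) (c : α → α → α → Prop), N ≤ S.card →
      (∃ T ⊆ S, T.card = a ∧ ∀ x ∈ T, ∀ y ∈ T, ∀ z ∈ T, g x < g y → g y < g z → c x y z) ∨
      (∃ T ⊆ S, T.card = b ∧ ∀ x ∈ T, ∀ y ∈ T, ∀ z ∈ T, g x < g y → g y < g z → ¬ c x y z) := by
  classical
  obtain ⟨N, hN⟩ := exists_monochromatic_subset (α := α) 3 a b
  refine ⟨N, fun S g c hS => ?_⟩
  have htriple : ∀ T : Finset α, ∀ x ∈ T, ∀ y ∈ T, ∀ z ∈ T, g x < g y → g y < g z →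
      {x, y, z} ⊆ T ∧ ({x, y, z} : Finset α).card = 3 := by
    intro T x hx y hy z hz hxy hyz
    refine ⟨by simp [Finset.insert_subset_iff, hx, hy, hz], Finset.card_eq_three.2
      ⟨x, y, z, ?_, ?_, ?_, rfl⟩⟩ <;> rintro rfl <;> order
  rcases hN S (fun U => ∀ x ∈ U, ∀ y ∈ U, ∀ z ∈ U, g x < g y → g y < g z → c x y z) hS with
    ⟨T, hTS, hT, hc⟩ | ⟨T, hTS, hT, hc⟩
  · refine .inl ⟨T, hTS, hT, fun x hx y hy z hz hxy hyz => ?_⟩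
    obtain ⟨hsub, hcard⟩ := htriple T x hx y hy z hz hxy hyz
    exact hc _ hsub hcard x (by simp) y (by simp) z (by simp) hxy hyz
  · refine .inr ⟨T, hTS, hT, fun x hx y hy z hz hxy hyz hxyz => ?_⟩
    obtain ⟨hsub, hcard⟩ := htriple T x hx y hy z hz hxy hyz
    refine hc _ hsub hcard fun x' hx' y' hy' z' hz' hxy' hyz' => ?_
    obtain ⟨rfl, rfl, rfl⟩ : x' = x ∧ y' = y ∧ z' = z :=
      eq_of_mem_triple_of_lt_of_lt hxy hyz hx' hy' hz' hxy' hyz'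
    exact hxyz

theorem exists_subset_injOn_or_const {α β : Type*} (g : α → β) (S : Finset α) (N n : ℕ)
    (hS : N * n < S.card) :
    (∃ T ⊆ S, T.card = N ∧ InjOn g T) ∨ (∃ T ⊆ S, T.card = n ∧ ∃ b, ∀ x ∈ T, g x = b) := by
  classical
  rcases le_or_gt N (S.image g).card with hN | hN
  · obtain ⟨B, hB, hBcard⟩ := Finset.exists_subset_card_eq hN
    obtain ⟨T, hTS, hinj, himage⟩ := Finset.exists_subset_injOn_image_eq_of_surjOn (f := g) S B
      fun b hb => by simpa using hB hb
    exact .inl ⟨T, mod_cast hTS, by rw [← Finset.card_image_of_injOn hinj, himage, hBcard], hinj⟩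
  · obtain ⟨b, -, hb⟩ := Finset.exists_lt_card_fiber_of_mul_lt_card_of_maps_to
      (fun x hx => Finset.mem_image_of_mem g hx) ((Nat.mul_le_mul_right n hN.le).trans_lt hS)
    obtain ⟨T, hT, hTcard⟩ := Finset.exists_subset_card_eq hb.le
    exact .inr ⟨T, hT.trans (Finset.filter_subset _ _), hTcard, b,
      fun x hx => (Finset.mem_filter.1 (hT hx)).2⟩

theorem nonempty_biInter_of_ordConnected_of_pairwise {ι 𝕜 : Type*} [Field 𝕜] [LinearOrder 𝕜]
    [IsStrictOrderedRing 𝕜] {s : Finset ι} {D : ι → Set 𝕜} (hD : ∀ i ∈ s, (D i).OrdConnected)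
    (hpair : ∀ i ∈ s, ∀ j ∈ s, (D i ∩ D j).Nonempty) : (⋂ i ∈ s, D i).Nonempty := by
  classical
  refine Convex.helly_theorem' (𝕜 := 𝕜) (fun i hi => (hD i hi).convex) fun I hI hcard => ?_
  rw [Module.finrank_self] at hcard
  interval_cases h : I.card
  · simp [Finset.card_eq_zero.1 h]
  · obtain ⟨i, rfl⟩ := Finset.card_eq_one.1 h
    simp only [Finset.singleton_subset_iff] at hI
    simpa using hpair i hI i hI
  · obtain ⟨i, j, -, rfl⟩ := Finset.card_eq_two.1 h
    simp only [Finset.insert_subset_iff, Finset.singleton_subset_iff] at hI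
    simpa using hpair i hI.1 j hI.2

theorem isPreconnected_biUnion_of_hasOpenLowerSections {X Y : Type*} [TopologicalSpace X]
    [TopologicalSpace Y] {s : Set X} {C : X → Set Y} (hs : IsPreconnected s)
    (hC : ∀ x ∈ s, IsConnected (C x)) (hlower : HasOpenLowerSections C) :
    IsPreconnected (⋃ x ∈ s, C x) := by
  have hopen : ∀ w : Set Y, IsOpen {x | (C x ∩ w).Nonempty} := fun w => by
    have : {x | (C x ∩ w).Nonempty} = ⋃ y ∈ w, {x | y ∈ C x} := by
      ext x; simp [Set.Nonempty, and_comm]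
    exact this ▸ isOpen_biUnion fun y _ => hasOpenLowerSections_iff_isOpen.1 hlower y
  rintro u v hu hv hcover ⟨y, hy, hyu⟩ ⟨z, hz, hzv⟩
  obtain ⟨x, hx, hyx⟩ := mem_iUnion₂.1 hy
  obtain ⟨x', hx', hzx'⟩ := mem_iUnion₂.1 hz
  have hcoverC : ∀ x ∈ s, C x ⊆ u ∪ v := fun x hx => (subset_biUnion_of_mem hx).trans hcover
  obtain ⟨w, hw, hwu, hwv⟩ := hs _ _ (hopen u) (hopen v)
    (fun x hx => by
      obtain ⟨y, hy⟩ := (hC x hx).nonempty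
      exact (hcoverC x hx hy).imp (⟨y, hy, ·⟩) (⟨y, hy, ·⟩))
    ⟨x, hx, y, hyx, hyu⟩ ⟨x', hx', z, hzx', hzv⟩
  exact ((hC w hw).isPreconnected u v hu hv (hcoverC w hw) hwu hwv).mono
    (inter_subset_inter_left _ (subset_biUnion_of_mem hw))

section SupportFunction

variable {E : Type*} [NormedAddCommGroup E] [InnerProductSpace ℝ E] {A B : Set E} {u x : E}

/-- The support function of `A`: the largest value on `A` of the linear functional `⟪u, ·⟫`. It is
meaningful when `A` is nonempty and compact, and `u` need not be a unit vector. -/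
def supportFun (A : Set E) (u : E) : ℝ := sSup (inner ℝ u '' A)

theorem exists_inner_eq_supportFun (hA : IsCompact A) (hne : A.Nonempty) (u : E) :
    ∃ x ∈ A, inner ℝ u x = supportFun A u := by
  obtain ⟨x, hx, h⟩ := hA.exists_sSup_image_eq hne (f := inner ℝ u) (by fun_prop)
  exact ⟨x, hx, h.symm⟩

theorem supportFun_lt_iff (hA : IsCompact A) (hne : A.Nonempty) {r : ℝ} :
    supportFun A u < r ↔ ∀ x ∈ A, inner ℝ u x < r :=
  hA.sSup_lt_iff_of_continuous hne (by fun_prop) r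

theorem inner_le_supportFun (hA : IsCompact A) (hx : x ∈ A) (u : E) :
    inner ℝ u x ≤ supportFun A u :=
  le_csSup (hA.image (by fun_prop)).bddAbove (mem_image_of_mem _ hx)

theorem supportFun_smul (A : Set E) {r : ℝ} (hr : 0 ≤ r) (u : E) :
    supportFun A (r • u) = r * supportFun A u := by
  simp only [supportFun, ← smul_eq_mul, ← Real.sSup_smul_of_nonneg hr, ← image_smul, image_image,
    real_inner_smul_left]

theorem supportFun_zero (A : Set E) : supportFun A 0 = 0 := by
  simpa using supportFun_smul A le_rfl 0

theorem exists_forall_inner_lt [CompleteSpace E] (hA : Convex ℝ A) (hclosed : IsClosed A)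
    (hx : x ∉ A) : ∃ u : E, ∀ a ∈ A, inner ℝ u a < inner ℝ u x := by
  obtain ⟨f, r, hf, hr⟩ := geometric_hahn_banach_closed_point hA hclosed hx
  refine ⟨(InnerProductSpace.toDual ℝ E).symm f, fun a ha => ?_⟩
  simpa only [InnerProductSpace.toDual_symm_apply] using (hf a ha).trans hr

theorem exists_supportFun_lt_inner [CompleteSpace E] (hA : IsCompact A) (hne : A.Nonempty)
    (hconv : Convex ℝ A) (hx : x ∉ A) : ∃ u : E, supportFun A u < inner ℝ u x := by
  simpa only [supportFun_lt_iff hA hne] using exists_forall_inner_lt hconv hA.isClosed hx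

theorem convex_setOf_supportFun_lt_inner (hA : IsCompact A) (hne : A.Nonempty) (x : E) :
    Convex ℝ {u : E | supportFun A u < inner ℝ u x} := by
  have : {u : E | supportFun A u < inner ℝ u x} = ⋂ a ∈ A, {u | 0 < inner ℝ (x - a) u} := by
    ext u
    simp [supportFun_lt_iff hA hne, real_inner_comm, inner_sub_left]
  exact this ▸ convex_iInter₂ fun a _ => convex_halfSpace_gt (innerₗ E (x - a)).isLinear 0

theorem supportFun_lt_supportFun_iff (hA : IsCompact A) (hAne : A.Nonempty) (hB : IsCompact B) :
    supportFun B u < supportFun A u ↔ ∃ x ∈ A \ B, supportFun B u < inner ℝ u x := by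
  constructor
  · intro h
    obtain ⟨x, hx, hxu⟩ := exists_inner_eq_supportFun hA hAne u
    rw [← hxu] at h
    exact ⟨x, ⟨hx, fun hxB => h.not_ge (inner_le_supportFun hB hxB u)⟩, h⟩
  · rintro ⟨x, hx, h⟩
    exact h.trans_le (inner_le_supportFun hA hx.1 u)

theorem isPreconnected_setOf_supportFun_lt [CompleteSpace E] (hA : IsCompact A)
    (hAne : A.Nonempty) (hB : IsCompact B) (hBne : B.Nonempty) (hBconv : Convex ℝ B)
    (hdiff : IsPreconnected (A \ B)) :
    IsPreconnected {u : E | supportFun B u < supportFun A u} := by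
  have : {u : E | supportFun B u < supportFun A u} =
      ⋃ x ∈ A \ B, {u | supportFun B u < inner ℝ u x} := by
    ext u
    simp only [mem_ofPred_eq, mem_iUnion₂, exists_prop, supportFun_lt_supportFun_iff hA hAne hB]
  rw [this]
  refine isPreconnected_biUnion_of_hasOpenLowerSections hdiff (fun x hx => ⟨?_, ?_⟩) ?_
  · exact exists_supportFun_lt_inner hB hBne hBconv hx.2
  · exact (convex_setOf_supportFun_lt_inner hB hBne x).isPreconnected
  · exact hasOpenLowerSections_iff_isOpen.2 fun u =>
      isOpen_lt (f := fun _ => supportFun B u) (g := inner ℝ u) (by fun_prop) (by fun_prop)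

end SupportFunction

section ConvexHullUnion

variable {E : Type*} [AddCommGroup E] [Module ℝ E] [TopologicalSpace E] [ContinuousAdd E]
  [ContinuousSMul ℝ E]

theorem isCompact_convexJoin {s t : Set E} (hs : IsCompact s) (ht : IsCompact t) :
    IsCompact (convexJoin ℝ s t) := by
  have : convexJoin ℝ s t =
      (fun p : (E × E) × ℝ => (1 - p.2) • p.1.1 + p.2 • p.1.2) '' ((s ×ˢ t) ×ˢ Icc 0 1) := by
    ext x
    simp [mem_convexJoin, segment_eq_image, and_assoc]
  exact this ▸ ((hs.prod ht).prod isCompact_Icc).image (by fun_prop)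

theorem isCompact_convexHull_sUnion {S : Set (Set E)} (hS : S.Finite)
    (hcompact : ∀ A ∈ S, IsCompact A) (hconv : ∀ A ∈ S, Convex ℝ A) :
    IsCompact (convexHull ℝ (⋃₀ S)) := by
  induction S, hS using Finite.induction_on with
  | empty => simp
  | @insert A S _ _ ih =>
    simp only [mem_insert_iff, forall_eq_or_imp] at hcompact hconv
    have hrest := ih hcompact.2 hconv.2
    rw [sUnion_insert, ← convexHull_convexHull_union_right]
    rcases A.eq_empty_or_nonempty with rfl | hA
    · simpa using hrest
    rcases (convexHull ℝ (⋃₀ S)).eq_empty_or_nonempty with h | hne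
    · simpa [h, hconv.1.convexHull_eq] using hcompact.1
    · rw [hconv.1.convexHull_union (convex_convexHull ℝ _) hA hne]
      exact isCompact_convexJoin hcompact.1 hrest

end ConvexHullUnion

theorem convexPos_iff_forall_exists_supportFun_lt {G : Set (Set Plane)} (hG : G.Finite)
    (hbody : ∀ A ∈ G, ConvexBody2 A) :
    ConvexPos G ↔ ∀ A ∈ G, ∃ u, ∀ B ∈ G, B ≠ A → supportFun B u < supportFun A u := by
  refine forall₂_congr fun A hA => ⟨fun hne => ?_, fun ⟨u, hu⟩ heq => ?_⟩
  · obtain ⟨x, hxA, hx⟩ : ∃ x ∈ A, x ∉ convexHull ℝ (⋃₀ (G \ {A})) := by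
      by_contra! hsub
      refine hne ((convexHull_min (sUnion_subset fun B hB => ?_) (convex_convexHull ℝ _)).antisymm
        (convexHull_mono (sUnion_mono sdiff_subset)))
      rcases eq_or_ne B A with rfl | hBA
      · exact hsub
      · exact (subset_sUnion_of_mem (show B ∈ G \ {A} from ⟨hB, hBA⟩)).trans (subset_convexHull ℝ _)
    have hclosed : IsClosed (convexHull ℝ (⋃₀ (G \ {A}))) :=
      (isCompact_convexHull_sUnion hG.sdiff (fun B hB => (hbody B hB.1).2.1)
        fun B hB => (hbody B hB.1).2.2).isClosed
    obtain ⟨u, hu⟩ := exists_forall_inner_lt (convex_convexHull ℝ _) hclosed hx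
    refine ⟨u, fun B hB hBA => lt_of_lt_of_le ?_ (inner_le_supportFun (hbody A hA).2.1 hxA u)⟩
    exact (supportFun_lt_iff (hbody B hB).2.1 (hbody B hB).1).2 fun b hb =>
      hu b (subset_convexHull ℝ _ (mem_sUnion_of_mem hb ⟨hB, hBA⟩))
  · obtain ⟨x, hxA, hx⟩ := exists_inner_eq_supportFun (hbody A hA).2.1 (hbody A hA).1 u
    have hhalf : convexHull ℝ (⋃₀ (G \ {A})) ⊆ {y | inner ℝ u y < inner ℝ u x} := by
      refine convexHull_min (sUnion_subset fun B ⟨hB, hBA⟩ b hb => ?_)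
        (convex_halfSpace_lt (innerₗ Plane u).isLinear _)
      exact (inner_le_supportFun (hbody B hB).2.1 hb u).trans_lt (hx ▸ hu B hB hBA)
    have hxx : inner ℝ u x < inner ℝ u x :=
      hhalf (heq ▸ subset_convexHull ℝ _ (mem_sUnion_of_mem hxA hA))
    exact hxx.false

section PolarAngle

open scoped Real

/-- The unit vector of the plane at angle `t`. -/
def unitVec (t : ℝ) : Plane := Complex.orthonormalBasisOneI.repr (Complex.exp (t * Complex.I))

/-- The polar angle of `u`, normalised to lie in `(t₀, t₀ + 2π]`. -/
def angleFrom (t₀ : ℝ) (u : Plane) : ℝ :=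
  Complex.arg (Complex.orthonormalBasisOneI.repr.symm u *
    Complex.exp (-((t₀ + π : ℝ) * Complex.I))) + (t₀ + π)

theorem unitVec_add_two_pi (t : ℝ) : unitVec (t + 2 * π) = unitVec t := by
  simp [unitVec, add_mul, Complex.exp_add, Complex.exp_two_pi_mul_I]

theorem norm_smul_unitVec_angleFrom (t₀ : ℝ) (u : Plane) :
    ‖u‖ • unitVec (angleFrom t₀ u) = u := by
  set z := Complex.orthonormalBasisOneI.repr.symm u with hz
  set w := z * Complex.exp (-((t₀ + π : ℝ) * Complex.I)) with hw
  have hnorm : ‖w‖ = ‖u‖ := by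
    rw [hw, norm_mul, ← neg_mul, ← Complex.ofReal_neg, Complex.norm_exp_ofReal_mul_I, mul_one, hz,
      LinearIsometryEquiv.norm_map]
  have hangle : angleFrom t₀ u = w.arg + (t₀ + π) := rfl
  have hpolar : ‖u‖ * Complex.exp (angleFrom t₀ u * Complex.I) = z := by
    rw [hangle, Complex.ofReal_add, add_mul, Complex.exp_add, ← mul_assoc, ← hnorm,
      Complex.norm_mul_exp_arg_mul_I, hw, mul_assoc, ← Complex.exp_add, neg_add_cancel,
      Complex.exp_zero, mul_one]
  rw [unitVec, ← map_smul, Complex.real_smul, hpolar, hz, LinearIsometryEquiv.apply_symm_apply]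

theorem angleFrom_mem_Ioc (t₀ : ℝ) (u : Plane) : angleFrom t₀ u ∈ Ioc t₀ (t₀ + 2 * π) := by
  have := Complex.arg_mem_Ioc (Complex.orthonormalBasisOneI.repr.symm u *
    Complex.exp (-((t₀ + π : ℝ) * Complex.I)))
  constructor <;> simp only [angleFrom] <;> linarith [this.1, this.2]

theorem angleFrom_unitVec {t₀ t : ℝ} (ht : t ∈ Ioc t₀ (t₀ + 2 * π)) :
    angleFrom t₀ (unitVec t) = t := by
  rw [angleFrom, unitVec, LinearIsometryEquiv.symm_apply_apply, ← Complex.exp_add, ← neg_mul,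
    ← add_mul, ← Complex.ofReal_neg, ← Complex.ofReal_add, Complex.arg_exp_mul_I,
    (toIocMod_eq_self _).2 ⟨by linarith [ht.1], by linarith [ht.2]⟩]
  ring

theorem continuousAt_angleFrom {t₀ : ℝ} {u : Plane} (hu : u ≠ 0)
    (hangle : angleFrom t₀ u ≠ t₀ + 2 * π) : ContinuousAt (angleFrom t₀) u := by
  refine ContinuousAt.add (ContinuousAt.comp' (Complex.continuousAt_arg ?_) (by fun_prop))
    continuousAt_const
  refine Complex.mem_slitPlane_iff_arg.2
    ⟨fun h => hangle ?_, mul_ne_zero ?_ (Complex.exp_ne_zero _)⟩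
  · rw [angleFrom, h]
    ring
  · simpa only [ne_eq, map_eq_zero_iff _ (LinearIsometryEquiv.injective _)] using hu

theorem ordConnected_Icc_inter_preimage_unitVec {U : Set Plane} (hU : IsPreconnected U)
    (hzero : 0 ∉ U) (hcone : ∀ u ∈ U, ∀ r : ℝ, 0 < r → r • u ∈ U) {t₀ : ℝ}
    (ht₀ : unitVec t₀ ∉ U) : (Icc t₀ (t₀ + 2 * π) ∩ unitVec ⁻¹' U).OrdConnected := by
  have hne : ∀ u ∈ U, u ≠ 0 := fun u hu h => hzero (h ▸ hu)
  have hmem : ∀ u ∈ U, unitVec (angleFrom t₀ u) ∈ U := fun u hu => by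
    have hnorm := norm_pos_iff.2 (hne u hu)
    rw [(eq_inv_smul_iff₀ hnorm.ne').2 (norm_smul_unitVec_angleFrom t₀ u)]
    exact hcone u hu _ (inv_pos.2 hnorm)
  have himage : Icc t₀ (t₀ + 2 * π) ∩ unitVec ⁻¹' U = angleFrom t₀ '' U := by
    apply Subset.antisymm
    · rintro t ⟨ht, htU⟩
      have : t ≠ t₀ := fun h => ht₀ (h ▸ htU)
      exact ⟨unitVec t, htU, angleFrom_unitVec ⟨ht.1.lt_of_ne' this, ht.2⟩⟩
    · rintro _ ⟨u, hu, rfl⟩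
      exact ⟨Ioc_subset_Icc_self (angleFrom_mem_Ioc t₀ u), hmem u hu⟩
  rw [himage, ← isPreconnected_iff_ordConnected]
  refine hU.image _ fun u hu => (continuousAt_angleFrom (hne u hu) fun h => ?_).continuousWithinAt
  exact ht₀ (unitVec_add_two_pi t₀ ▸ h ▸ hmem u hu)

end PolarAngle

section Leading

open scoped Real

variable {A B C : Set Plane} {t e : ℝ}

theorem ordConnected_Icc_inter_setOf_supportFun_lt (hA : ConvexBody2 A) (hB : ConvexBody2 B)
    (hdiff : IsPreconnected (A \ B)) {t₀ : ℝ}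
    (ht₀ : supportFun A (unitVec t₀) ≤ supportFun B (unitVec t₀)) :
    (Icc t₀ (t₀ + 2 * π) ∩
      {t | supportFun B (unitVec t) < supportFun A (unitVec t)}).OrdConnected := by
  refine ordConnected_Icc_inter_preimage_unitVec
    (isPreconnected_setOf_supportFun_lt hA.2.1 hA.1 hB.2.1 hB.1 hB.2.2 hdiff) ?_ ?_ ht₀.not_gt
  · simp only [mem_ofPred_eq, supportFun_zero, lt_irrefl, not_false_eq_true]
  · intro u hu r hr
    simpa only [mem_ofPred_eq, supportFun_smul _ hr.le, mul_lt_mul_iff_right₀ hr] using hu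

/-- The angles in `[-π, π]` of the directions in which `A` reaches strictly further than `B`. -/
def leadSet (A B : Set Plane) : Set ℝ :=
  {t ∈ Icc (-π) π | supportFun B (unitVec t) < supportFun A (unitVec t)}

/-- The support value of `A` in the direction `(-1, 0)`, where the circle of directions is cut open
into the interval `[-π, π]`. -/
def cutHeight (A : Set Plane) : ℝ := supportFun A (unitVec π)

/-- Some angle at which `B` leads `C` is joined to `e` through angles at which `B` leads `A`. For
`cutHeight A < cutHeight B ≤ cutHeight C` and `e = -π` or `e = π` this is the colour of the triple
in the Ramsey argument. -/
def LeadsFrom (e : ℝ) (A B C : Set Plane) : Prop :=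
  ((leadSet B A).ordConnectedComponent e ∩ leadSet B C).Nonempty

open scoped Classical in
/-- `leadSet A B`, shrunk to the piece attached to the end point `e` of `[-π, π]` when `A` leads `B`
at the cut. Unlike `leadSet A B` it is always an interval. -/
def cutLeadSet (e : ℝ) (A B : Set Plane) : Set ℝ :=
  if cutHeight A ≤ cutHeight B then leadSet A B else (leadSet A B).ordConnectedComponent e

theorem cutLeadSet_of_le (h : cutHeight A ≤ cutHeight B) : cutLeadSet e A B = leadSet A B :=
  if_pos h

theorem cutLeadSet_of_lt (h : cutHeight B < cutHeight A) :
    cutLeadSet e A B = (leadSet A B).ordConnectedComponent e :=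
  if_neg h.not_ge

theorem cutLeadSet_subset_leadSet : cutLeadSet e A B ⊆ leadSet A B := by
  rcases le_or_gt (cutHeight A) (cutHeight B) with h | h
  · exact (cutLeadSet_of_le h).subset
  · exact cutLeadSet_of_lt h ▸ ordConnectedComponent_subset

theorem unitVec_neg_pi : unitVec (-π) = unitVec π := by
  rw [← unitVec_add_two_pi]
  ring_nf

theorem mem_leadSet_of_cutHeight_lt (he : e = -π ∨ e = π)
    (h : cutHeight B < cutHeight A) : e ∈ leadSet A B := by
  have hpi := Real.pi_pos
  rcases he with rfl | rfl
  · exact ⟨⟨le_rfl, by linarith⟩, by rwa [unitVec_neg_pi]⟩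
  · exact ⟨⟨by linarith, le_rfl⟩, h⟩

theorem ordConnected_leadSet (hA : ConvexBody2 A) (hB : ConvexBody2 B)
    (hdiff : IsPreconnected (A \ B)) (h : cutHeight A ≤ cutHeight B) :
    (leadSet A B).OrdConnected := by
  have := ordConnected_Icc_inter_setOf_supportFun_lt hA hB hdiff (t₀ := -π)
    (by rwa [unitVec_neg_pi])
  rwa [show -π + 2 * π = π by ring] at this

theorem ordConnected_cutLeadSet (hA : ConvexBody2 A) (hB : ConvexBody2 B)
    (hdiff : IsPreconnected (A \ B)) : (cutLeadSet e A B).OrdConnected := by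
  rcases le_or_gt (cutHeight A) (cutHeight B) with h | h
  · exact cutLeadSet_of_le h ▸ ordConnected_leadSet hA hB hdiff h
  · exact cutLeadSet_of_lt h ▸ inferInstance

theorem angleFrom_mem_leadSet {u : Plane} (h : supportFun B u < supportFun A u) :
    angleFrom (-π) u ∈ leadSet A B := by
  have hangle := angleFrom_mem_Ioc (-π) u
  rw [show -π + 2 * π = π by ring] at hangle
  rw [← norm_smul_unitVec_angleFrom (-π) u, supportFun_smul _ (norm_nonneg u),
    supportFun_smul _ (norm_nonneg u)] at h
  exact ⟨Ioc_subset_Icc_self hangle, lt_of_mul_lt_mul_left h (norm_nonneg u)⟩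

theorem leadSet_nonempty (hA : ConvexBody2 A) (hB : ConvexBody2 B) (hdiff : (A \ B).Nonempty) :
    (leadSet A B).Nonempty := by
  obtain ⟨x, hxA, hxB⟩ := hdiff
  obtain ⟨u, hu⟩ := exists_supportFun_lt_inner hB.2.1 hB.1 hB.2.2 hxB
  exact ⟨_, angleFrom_mem_leadSet (hu.trans_le (inner_le_supportFun hA.2.1 hxA u))⟩

theorem convexPos_of_forall_exists_mem_leadSet {G : Set (Set Plane)} (hG : G.Finite)
    (hbody : ∀ A ∈ G, ConvexBody2 A) (h : ∀ A ∈ G, ∃ t, ∀ B ∈ G, B ≠ A → t ∈ leadSet A B) :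
    ConvexPos G :=
  (convexPos_iff_forall_exists_supportFun_lt hG hbody).2 fun A hA =>
    let ⟨t, ht⟩ := h A hA
    ⟨unitVec t, fun B hB hBA => (ht B hB hBA).2⟩

theorem mem_ordConnectedComponent_leadSet (hA : ConvexBody2 A) (hB : ConvexBody2 B)
    (hdiff : IsPreconnected (B \ A)) (hcut : cutHeight A < cutHeight B) (ht : t ∈ leadSet B A) :
    t ∈ (leadSet B A).ordConnectedComponent (-π) ∨
      t ∈ (leadSet B A).ordConnectedComponent π := by
  simp only [mem_ordConnectedComponent, uIcc_of_le ht.1.1, uIcc_of_ge ht.1.2]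
  -- Gaps on both sides of `t` would separate it from the cut within the arc of leading directions.
  by_contra! hgap
  obtain ⟨⟨s, hs, hsB⟩, ⟨s', hs', hsB'⟩⟩ := hgap.imp not_subset.1 not_subset.1
  have hpi : π ≤ s + 2 * π := by linarith [hs.1]
  have harc := ordConnected_Icc_inter_setOf_supportFun_lt hB hA hdiff (t₀ := s)
    (not_lt.1 fun h => hsB ⟨⟨hs.1, hs.2.trans ht.1.2⟩, h⟩)
  have hmem : s' ∈ Icc s (s + 2 * π) ∩
      {t | supportFun A (unitVec t) < supportFun B (unitVec t)} :=
    harc.out ⟨⟨hs.2, ht.1.2.trans hpi⟩, ht.2⟩ ⟨⟨hs.2.trans ht.1.2, hpi⟩, hcut⟩ hs'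
  exact hsB' ⟨⟨ht.1.1.trans hs'.1, hs'.2⟩, hmem.2⟩

theorem leadsFrom_neg_pi_or_leadsFrom_pi (hA : ConvexBody2 A) (hB : ConvexBody2 B)
    (hdiff : IsPreconnected (B \ A)) (hcut : cutHeight A < cutHeight B)
    (hlead : (leadSet B A ∩ leadSet B C).Nonempty) :
    LeadsFrom (-π) A B C ∨ LeadsFrom π A B C := by
  obtain ⟨t, htA, htC⟩ := hlead
  exact (mem_ordConnectedComponent_leadSet hA hB hdiff hcut htA).imp (⟨t, ·, htC⟩) (⟨t, ·, htC⟩)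

end Leading

section Families

open scoped Real

variable {F : Set (Set Plane)}

theorem GenPos.mono {G : Set (Set Plane)} (hgen : GenPos F) (hGF : G ⊆ F) : GenPos G :=
  fun T hT => hgen T (hT.trans hGF)

theorem GenPos.nonempty_leadSet_inter_leadSet (hgen : GenPos F) (hbody : ∀ A ∈ F, ConvexBody2 A)
    (hcross : F.Pairwise NoncrossingPair) {A B C : Set Plane} (hA : A ∈ F) (hB : B ∈ F)
    (hC : C ∈ F) (hBA : B ≠ A) (hCA : C ≠ A) : (leadSet A B ∩ leadSet A C).Nonempty := by
  rcases eq_or_ne B C with rfl | hBC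
  · simpa using leadSet_nonempty (hbody A hA) (hbody B hB) (hcross hA hB hBA.symm).1.nonempty
  have htriple : ({A, B, C} : Set (Set Plane)) ⊆ F := by
    simp only [insert_subset_iff, singleton_subset_iff, hA, hB, hC, and_self]
  have hpos := hgen _ htriple (ncard_eq_three.2 ⟨A, B, C, hBA.symm, hCA.symm, hBC, rfl⟩)
  obtain ⟨u, hu⟩ := (convexPos_iff_forall_exists_supportFun_lt (toFinite _)
    fun D hD => hbody D (htriple hD)).1 hpos A (by simp)
  exact ⟨angleFrom (-π) u, angleFrom_mem_leadSet (hu B (by simp) hBA),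
    angleFrom_mem_leadSet (hu C (by simp) hCA)⟩

theorem nonempty_cutLeadSet_inter_cutLeadSet {e : ℝ} {A B C : Set Plane}
    (he : e = -π ∨ e = π) (hlead : (leadSet A B ∩ leadSet A C).Nonempty)
    (hBAC : cutHeight B < cutHeight A → cutHeight A ≤ cutHeight C → LeadsFrom e B A C)
    (hCAB : cutHeight C < cutHeight A → cutHeight A ≤ cutHeight B → LeadsFrom e C A B) :
    (cutLeadSet e A B ∩ cutLeadSet e A C).Nonempty := by
  rcases le_or_gt (cutHeight A) (cutHeight B) with hB | hB <;>
    rcases le_or_gt (cutHeight A) (cutHeight C) with hC | hC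
  · rwa [cutLeadSet_of_le hB, cutLeadSet_of_le hC]
  · rw [cutLeadSet_of_le hB, cutLeadSet_of_lt hC, inter_comm]
    exact hCAB hC hB
  · rw [cutLeadSet_of_lt hB, cutLeadSet_of_le hC]
    exact hBAC hB hC
  · rw [cutLeadSet_of_lt hB, cutLeadSet_of_lt hC]
    exact ⟨e, self_mem_ordConnectedComponent.2 (mem_leadSet_of_cutHeight_lt he hB),
      self_mem_ordConnectedComponent.2 (mem_leadSet_of_cutHeight_lt he hC)⟩

theorem GenPos.convexPos_of_forall_leadsFrom {e : ℝ} (hgen : GenPos F) (hfin : F.Finite)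
    (hbody : ∀ A ∈ F, ConvexBody2 A) (hcross : F.Pairwise NoncrossingPair)
    (he : e = -π ∨ e = π)
    (hleads : ∀ A ∈ F, ∀ B ∈ F, ∀ C ∈ F, cutHeight A < cutHeight B → cutHeight B ≤ cutHeight C →
      B ≠ C → LeadsFrom e A B C) : ConvexPos F := by
  classical
  refine convexPos_of_forall_exists_mem_leadSet hfin hbody fun A hA => ?_
  have hmem : ∀ B ∈ hfin.toFinset.erase A, B ≠ A ∧ B ∈ F := fun B hB => by simpa using hB
  have harc : ∀ B ∈ hfin.toFinset.erase A, (cutLeadSet e A B).OrdConnected := fun B hB =>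
    have ⟨hBA, hBF⟩ := hmem B hB
    ordConnected_cutLeadSet (hbody A hA) (hbody B hBF) (hcross hA hBF hBA.symm).1.isPreconnected
  have hmeet : ∀ B ∈ hfin.toFinset.erase A, ∀ C ∈ hfin.toFinset.erase A,
      (cutLeadSet e A B ∩ cutLeadSet e A C).Nonempty := fun B hB C hC =>
    have ⟨hBA, hBF⟩ := hmem B hB
    have ⟨hCA, hCF⟩ := hmem C hC
    nonempty_cutLeadSet_inter_cutLeadSet he
      (hgen.nonempty_leadSet_inter_leadSet hbody hcross hA hBF hCF hBA hCA)
      (fun h h' => hleads B hBF A hA C hCF h h' hCA.symm)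
      (fun h h' => hleads C hCF A hA B hBF h h' hBA.symm)
  obtain ⟨t, ht⟩ := nonempty_biInter_of_ordConnected_of_pairwise harc hmeet
  exact ⟨t, fun B hB hBA =>
    cutLeadSet_subset_leadSet (mem_iInter₂.1 ht B (by simpa using ⟨hBA, hB⟩))⟩

theorem exists_subset_forall_leadsFrom (n : ℕ) :
    ∃ M, ∀ F : Finset (Set Plane), M ≤ F.card → (∀ A ∈ F, ConvexBody2 A) →
      (F : Set (Set Plane)).Pairwise NoncrossingPair → GenPos F →
      ∃ T ⊆ F, T.card = n ∧ ∃ e, (e = -π ∨ e = π) ∧ ∀ A ∈ T, ∀ B ∈ T, ∀ C ∈ T,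
        cutHeight A < cutHeight B → cutHeight B ≤ cutHeight C → B ≠ C → LeadsFrom e A B C := by
  obtain ⟨N, hN⟩ := exists_monochromatic_increasing_triples (α := Set Plane) (β := ℝ) n n
  refine ⟨N * n + 1, fun F hcard hbody hcross hgen => ?_⟩
  rcases exists_subset_injOn_or_const cutHeight F N n hcard with
    ⟨S, hSF, hS, hinj⟩ | ⟨T, hTF, hT, r, hr⟩
  · have hlt : ∀ B ∈ S, ∀ C ∈ S, cutHeight B ≤ cutHeight C → B ≠ C → cutHeight B < cutHeight C :=
      fun B hB C hC hle hne => hle.lt_of_ne fun heq => hne (hinj hB hC heq)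
    have hends : ∀ A ∈ S, ∀ B ∈ S, ∀ C ∈ S, cutHeight A < cutHeight B → B ≠ C →
        LeadsFrom (-π) A B C ∨ LeadsFrom π A B C := fun A hA B hB C hC hAB hBC =>
      have hBA : B ≠ A := fun h => hAB.ne (h ▸ rfl)
      leadsFrom_neg_pi_or_leadsFrom_pi (hbody A (hSF hA)) (hbody B (hSF hB))
        (hcross (hSF hB) (hSF hA) hBA).1.isPreconnected hAB
        (hgen.nonempty_leadSet_inter_leadSet hbody hcross (hSF hB) (hSF hA) (hSF hC) hBA.symm
          hBC.symm)
    rcases hN S cutHeight (LeadsFrom (-π)) hS.ge with ⟨T, hTS, hT, hc⟩ | ⟨T, hTS, hT, hc⟩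
    · exact ⟨T, hTS.trans hSF, hT, -π, .inl rfl, fun A hA B hB C hC hAB hBC hne =>
        hc A hA B hB C hC hAB (hlt B (hTS hB) C (hTS hC) hBC hne)⟩
    · exact ⟨T, hTS.trans hSF, hT, π, .inr rfl, fun A hA B hB C hC hAB hBC hne =>
        (hends A (hTS hA) B (hTS hB) C (hTS hC) hAB hne).resolve_left
          (hc A hA B hB C hC hAB (hlt B (hTS hB) C (hTS hC) hBC hne))⟩
  · exact ⟨T, hTF, hT, π, .inr rfl, fun A hA B hB _ _ hAB =>
      (hAB.ne ((hr A hA).trans (hr B hB).symm)).elim⟩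

end Families

/-- Pach–Tóth: Erdős–Szekeres for noncrossing convex bodies. -/
theorem erdos_szekeres_noncrossing_bodies :
    ∀ n : ℕ, 3 ≤ n → ∃ M : ℕ, ∀ F : Set (Set Plane), F.Finite → M ≤ F.ncard →
      (∀ A ∈ F, ConvexBody2 A) → F.Pairwise NoncrossingPair → GenPos F →
      ∃ G ⊆ F, G.ncard = n ∧ ConvexPos G := by
  intro n _
  obtain ⟨M, hM⟩ := exists_subset_forall_leadsFrom n
  refine ⟨M, fun F hfin hcard hbody hcross hgen => ?_⟩
  lift F to Finset (Set Plane) using hfin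
  rw [ncard_coe_finset] at hcard
  obtain ⟨T, hTF, hT, e, he, hleads⟩ := hM F hcard hbody hcross hgen
  have hTF' : (T : Set (Set Plane)) ⊆ F := mod_cast hTF
  exact ⟨T, hTF', by rw [ncard_coe_finset, hT],
    (hgen.mono hTF').convexPos_of_forall_leadsFrom T.finite_toSet (fun A hA => hbody A (hTF hA))
      (hcross.mono hTF') he hleads⟩
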